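/- Let q be a prime power, let n ≥ 1, let s be an integer with gcd(s,n) = 1, put σ = q^s, and let f(x) = Σ_{i=0}^{n−1} a_i x^{σ^i} ∈ F_{q^n}[x]. Let 0 ≤ m ≤ dim_q ker f, and let J, K ⊆ {0,1,…,n−1} each be a set of m consecutive integers modulo n (i.e. of the form {j, j+1, …, j+m−1} reduced mod n). Let M_{J,K}(f) be the (n−m)×(n−m) matrix obtained from D_σ(f) by removing the rows with indices in J and the columns with indices in K. Then det(M_{J,K}(f)) = 0 if and only if det(D_{m,σ}(f)) = 0. -/

import Mathlib

/-- `D_{m,σ}(f)`: the `(n-m) × (n-m)` matrix obtained from the `σ`-Dickson matrix of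
`f = ∑_{i=0}^{n-1} a_i x^{σ^i}` by removing its first `m` columns and last `m` rows. -/
noncomputable def dickSub (σ n m : ℕ) {F : Type*} [Field F] (a : ℕ → F) :
    Matrix (Fin (n - m)) (Fin (n - m)) F :=
  Matrix.of fun i j => a ((j.val + m + n - i.val) % n) ^ σ ^ i.val

/-!
Let `L/K` be cyclic of degree `n` with Galois group generated by `σ`, and let
`f = ∑ g, a g • g`. Coefficient vectors of such operators form the crossed product of `L` with the
Galois group, and the Dickson matrix represents right multiplication by `f`: if `c` is the
coefficient vector of `h`, then `c ᵥ* dicksonMatrix a` is that of `h ∘ f`.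

As `σ` fixes only `K`, a nonzero combination of `k` consecutive powers of `σ` has a kernel of
dimension less than `k`: if it kills `u ≠ 0`, summation by parts writes its value at `x` as a
combination of `k - 1` consecutive powers of `σ` applied to `(σ - 1) (u⁻¹ * x)`, and the kernel
`K ∙ u` of `x ↦ (σ - 1) (u⁻¹ * x)` is one-dimensional.

Let `ρ` be the rank of `f`. If `h ∘ f` has zero coefficients at `ρ` consecutive powers of `σ`, the
remaining `n - ρ = dim ker f` powers are again consecutive modulo `n`, and `h ∘ f` kills `ker f`, so
`h ∘ f = 0`. Hence every row combination of the Dickson matrix is determined by any `ρ` cyclically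
consecutive entries, and all minors of order greater than `ρ` vanish. If a minor of order `ρ` on
consecutive rows and columns vanished, some nonzero `h` supported on `ρ` consecutive powers would
satisfy `h ∘ f = 0` and thus kill the `ρ`-dimensional image of `f`, which is impossible. So for
`m ≤ dim ker f` the minors of order `n - m` on consecutive rows and columns vanish exactly when
`m < dim ker f`, independently of their position.
-/

open Finset Module Submodule Matrix

section FixedField

variable {K L : Type*} [Field K] [Field L] [Algebra K L]

theorem finrank_le_finrank_map_add_one {V W : Type*} [AddCommGroup V] [Module K V]
    [AddCommGroup W] [Module K W] (f : V →ₗ[K] W) {v : V} (hf : f.ker ≤ K ∙ v)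
    (U : Submodule K V) [FiniteDimensional K U] :
    finrank K U ≤ finrank K (U.map f) + 1 := by
  have hker : finrank K (f.domRestrict U).ker ≤ 1 :=
    calc finrank K (f.domRestrict U).ker
        = finrank K ((f.domRestrict U).ker.map U.subtype) :=
          (finrank_map_subtype_eq _ _).symm
      _ ≤ finrank K (K ∙ v) := Submodule.finrank_mono <| by
          rintro _ ⟨x, hx, rfl⟩
          exact hf hx
      _ ≤ 1 := finrank_span_le_card {v}
  have hrank := (f.domRestrict U).finrank_range_add_finrank_ker
  rw [LinearMap.range_domRestrict] at hrank
  lia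

theorem ker_sub_one_comp_mulLeft_inv_le {σ : L →ₐ[K] L}
    (hσ : ∀ x, σ x = x → x ∈ (⊥ : Subalgebra K L)) {u : L} (hu : u ≠ 0) :
    ((σ.toLinearMap - 1) ∘ₗ LinearMap.mulLeft K u⁻¹).ker ≤ K ∙ u := by
  intro x hx
  obtain ⟨y, hy⟩ := Algebra.mem_bot.1 (hσ (u⁻¹ * x) (sub_eq_zero.1 hx))
  refine Submodule.mem_span_singleton.2 ⟨y, ?_⟩
  rw [Algebra.smul_def, hy, mul_comm, mul_inv_cancel_left₀ hu]

theorem eq_zero_of_sum_mul_pow_eq_zero {σ : L →ₐ[K] L}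
    (hσ : ∀ x, σ x = x → x ∈ (⊥ : Subalgebra K L)) {k : ℕ} {c : ℕ → L} {U : Submodule K L}
    (hU : k ≤ finrank K U) (hc : ∀ x ∈ U, ∑ i ∈ range k, c i * (σ ^ i) x = 0) :
    ∀ i < k, c i = 0 := by
  induction k generalizing c U with
  | zero => simp
  | succ k ih =>
    have : FiniteDimensional K U := Module.finite_of_finrank_pos (by lia)
    obtain ⟨u, huU, hu⟩ : ∃ u ∈ U, u ≠ 0 :=
      U.exists_mem_ne_zero_of_ne_bot (Submodule.one_le_finrank_iff.1 (by lia))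
    let S : ℕ → L := fun l => ∑ j ∈ range l, c j * (σ ^ j) u
    let δ : L →ₗ[K] L := (σ.toLinearMap - 1) ∘ₗ LinearMap.mulLeft K u⁻¹
    have hδU : k ≤ finrank K (U.map δ) := by
      have := finrank_le_finrank_map_add_one δ (ker_sub_one_comp_mulLeft_inv_le hσ hu) U
      lia
    have hSδ : ∀ y ∈ U.map δ, ∑ i ∈ range k, S (i + 1) * (σ ^ i) y = 0 := by
      rintro _ ⟨x, hx, rfl⟩
      have hx0 : ∑ i ∈ range (k + 1), (σ ^ i) (u⁻¹ * x) • (c i * (σ ^ i) u) = 0 := by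
        rw [← hc x hx]
        refine sum_congr rfl fun i _ => ?_
        rw [smul_eq_mul, mul_left_comm, ← map_mul, mul_right_comm, inv_mul_cancel₀ hu, one_mul]
      rw [sum_range_by_parts, Nat.add_sub_cancel, hc u huU, smul_zero, zero_sub,
        neg_eq_zero] at hx0
      rw [← hx0]
      refine sum_congr rfl fun i _ => ?_
      have hδ : (σ ^ i) (δ x) = (σ ^ (i + 1)) (u⁻¹ * x) - (σ ^ i) (u⁻¹ * x) :=
        map_sub (σ ^ i) (σ (u⁻¹ * x)) (u⁻¹ * x)
      rw [hδ, smul_eq_mul, mul_comm]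
    have hS : ∀ l ≤ k + 1, S l = 0 := by
      rintro (_ | l) hl
      · exact sum_range_zero _
      · rcases hl.eq_or_lt with h | h
        · rw [h]; exact hc u huU
        · exact ih hδU hSδ l (by lia)
    intro i hi
    have hci : c i * (σ ^ i) u = 0 := by
      rw [← sum_range_succ_sub_sum (fun j => c j * (σ ^ j) u)]
      exact (congrArg₂ _ (hS (i + 1) hi) (hS i hi.le)).trans (sub_zero 0)
    exact (mul_eq_zero.1 hci).resolve_right ((map_ne_zero _).2 hu)

end FixedField

theorem injOn_pow_add_Iio_orderOf {G : Type*} [LeftCancelMonoid G] (x : G) (k : ℕ) :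
    Set.InjOn (fun i => x ^ (k + i)) (Set.Iio (orderOf x)) := fun i hi j hj h =>
  pow_injOn_Iio_orderOf hi hj (mul_left_cancel (by simpa only [pow_add] using h))

section GaloisOperator

variable {K L : Type*} [Field K] [Field L] [Algebra K L] [FiniteDimensional K L]

/-- The `K`-linear endomorphism `∑ g, a g • g` of `L` with coefficients `a`. When `Gal(L/K)` is
generated by `σ`, it plays the role of the polynomial `∑ i, a_i x^{σ^i}`, with `a_i = a (σ ^ i)`. -/
noncomputable def galoisOperator (a : Gal(L/K) → L) : L →ₗ[K] L :=
  ∑ g, a g • g.toLinearMap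

theorem galoisOperator_apply (a : Gal(L/K) → L) (x : L) :
    galoisOperator a x = ∑ g, a g * g x := by
  simp [galoisOperator]

/-- The Dickson matrix of `∑ g, a g • g`. Its rows and columns are indexed by the Galois group
instead of `ℤ/n`: for `Gal(L/K)` generated by `σ` and `a_i = a (σ ^ i)`, its entry at
`(σ ^ i, σ ^ j)` is the `i`-th `σ`-conjugate of `a_{j - i}`. -/
def dicksonMatrix (a : Gal(L/K) → L) : Matrix Gal(L/K) Gal(L/K) L :=
  Matrix.of fun g h => g (a (g⁻¹ * h))

/-- The submatrix of the Dickson matrix on the cyclically consecutive rows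
`σ ^ j, …, σ ^ (j + l - 1)` and columns `σ ^ k, …, σ ^ (k + l - 1)`: these are the rows and columns
that are kept. -/
def cyclicSubmatrix (a : Gal(L/K) → L) (σ : Gal(L/K)) (l j k : ℕ) :
    Matrix (Fin l) (Fin l) L :=
  (dicksonMatrix a).submatrix (fun r => σ ^ (j + r.val)) (fun t => σ ^ (k + t.val))

theorem galoisOperator_vecMul_dicksonMatrix (c a : Gal(L/K) → L) :
    galoisOperator (c ᵥ* dicksonMatrix a) = galoisOperator c ∘ₗ galoisOperator a := by
  ext x
  calc galoisOperator (c ᵥ* dicksonMatrix a) x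
      = ∑ g, c g * ∑ h, g (a (g⁻¹ * h)) * h x := by
        simp only [galoisOperator_apply, Matrix.vecMul, dotProduct, dicksonMatrix,
          Matrix.of_apply, sum_mul, mul_sum, mul_assoc]
        exact sum_comm
    _ = ∑ g, c g * ∑ h, g (a h) * (g * h) x := by
        refine sum_congr rfl fun g _ => congrArg (c g * ·) ?_
        refine (Fintype.sum_equiv (Equiv.mulLeft g) _ _ fun h => ?_).symm
        rw [Equiv.coe_mulLeft, inv_mul_cancel_left]
    _ = galoisOperator c (galoisOperator a x) := by
        rw [galoisOperator_apply, galoisOperator_apply]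
        simp only [map_sum, map_mul, AlgEquiv.mul_apply]

theorem galoisOperator_apply_eq_sum_range {σ : Gal(L/K)} {b : Gal(L/K) → L} {j k : ℕ}
    (hk : k ≤ orderOf σ) (hb : ∀ g, b g ≠ 0 → ∃ i < k, σ ^ (j + i) = g) (x : L) :
    galoisOperator b x = ∑ i ∈ range k, b (σ ^ (j + i)) * (σ ^ (j + i)) x := by
  classical
  have hinj : Set.InjOn (fun i => σ ^ (j + i)) (range k) :=
    (injOn_pow_add_Iio_orderOf σ j).mono fun i hi => (mem_range.1 hi).trans_le hk
  rw [galoisOperator_apply, ← sum_image (f := fun g => b g * g x) hinj]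
  refine (sum_subset (subset_univ _) fun g _ hg => ?_).symm
  have hbg : b g = 0 := by
    by_contra h
    obtain ⟨i, hi, rfl⟩ := hb g h
    exact hg (mem_image_of_mem _ (mem_range.2 hi))
  rw [hbg, zero_mul]

end GaloisOperator

theorem vecMul_submatrix {R m n l o : Type*} [NonAssocSemiring R] [Fintype m] [Fintype n]
    [DecidableEq n] (M : Matrix n l R) (row : m → n) (col : o → l) (c : m → R) :
    c ᵥ* M.submatrix row col = ((c ᵥ* (1 : Matrix n n R).submatrix row id) ᵥ* M) ∘ col := by
  ext i
  simp [vecMul, dotProduct, one_apply, sum_mul, ← sum_comm (s := univ (α := m))]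

section Cyclic

variable {K L : Type*} [Field K] [Field L] [Algebra K L] [FiniteDimensional K L] [IsGalois K L]
  {σ : Gal(L/K)}

theorem orderOf_eq_finrank_of_forall_mem_zpowers (hσ : ∀ τ, τ ∈ Subgroup.zpowers σ) :
    orderOf σ = finrank K L :=
  (orderOf_eq_card_of_forall_mem_zpowers hσ).trans (IsGalois.card_aut_eq_finrank K L)

theorem mem_bot_of_apply_eq_self (hσ : ∀ τ, τ ∈ Subgroup.zpowers σ) {x : L} (hx : σ x = x) :
    x ∈ (⊥ : Subalgebra K L) :=
  (IsGalois.mem_bot_iff_fixed (F := K) x).2 fun τ =>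
    (Subgroup.zpowers_le (H := MulAction.stabilizer Gal(L/K) x)).2 hx (hσ τ)

theorem exists_lt_finrank_pow_add_eq (hσ : ∀ τ, τ ∈ Subgroup.zpowers σ) (k : ℕ) (g : Gal(L/K)) :
    ∃ t < finrank K L, σ ^ (k + t) = g := by
  classical
  obtain ⟨t, ht, h⟩ := mem_image.1 (mem_zpowers_iff_mem_range_orderOf.1 (hσ ((σ ^ k)⁻¹ * g)))
  rw [mem_range, orderOf_eq_finrank_of_forall_mem_zpowers hσ] at ht
  exact ⟨t, ht, by rw [pow_add, h, mul_inv_cancel_left]⟩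

theorem eq_zero_of_le_ker_galoisOperator (hσ : ∀ τ, τ ∈ Subgroup.zpowers σ)
    {b : Gal(L/K) → L} {j k : ℕ} {U : Submodule K L} (hU : k ≤ finrank K U)
    (hb : ∀ g, b g ≠ 0 → ∃ i < k, σ ^ (j + i) = g) (hbU : U ≤ (galoisOperator b).ker) :
    b = 0 := by
  have hk : k ≤ orderOf σ := by
    rw [orderOf_eq_finrank_of_forall_mem_zpowers hσ]
    exact hU.trans U.finrank_le
  let φ : L →ₐ[K] L := σ
  have hφ : ∀ i x, (φ ^ i) x = (σ ^ i) x := fun i x => by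
    simp [φ]
  have hvanish : ∀ i < k, b (σ ^ (j + i)) = 0 := by
    refine eq_zero_of_sum_mul_pow_eq_zero (σ := φ) (U := U.map (σ ^ j).toLinearMap)
      (fun x => mem_bot_of_apply_eq_self hσ)
      (hU.trans_eq ((σ ^ j).toLinearEquiv.finrank_map_eq U).symm) ?_
    rintro _ ⟨x, hx, rfl⟩
    refine Eq.trans (sum_congr rfl fun i _ => ?_)
      ((galoisOperator_apply_eq_sum_range hk hb x).symm.trans (hbU hx))
    rw [add_comm j i, pow_add, hφ]
    rfl
  ext g
  by_contra hg
  obtain ⟨i, hi, rfl⟩ := hb g hg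
  exact hg (hvanish i hi)

theorem vecMul_dicksonMatrix_eq_zero (hσ : ∀ τ, τ ∈ Subgroup.zpowers σ)
    {a c : Gal(L/K) → L} {k l : ℕ} (hl : finrank K (galoisOperator a).range ≤ l)
    (hc : ∀ t < l, (c ᵥ* dicksonMatrix a) (σ ^ (k + t)) = 0) :
    c ᵥ* dicksonMatrix a = 0 := by
  have hrank := (galoisOperator a).finrank_range_add_finrank_ker
  refine eq_zero_of_le_ker_galoisOperator hσ (j := k + l) (k := finrank K L - l)
    (U := (galoisOperator a).ker) (by lia) (fun g hg => ?_) ?_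
  · obtain ⟨t, ht, rfl⟩ := exists_lt_finrank_pow_add_eq hσ k g
    have hlt : l ≤ t := not_lt.1 fun h => hg (hc t h)
    exact ⟨t - l, by lia, by rw [add_assoc, Nat.add_sub_cancel' hlt]⟩
  · rw [galoisOperator_vecMul_dicksonMatrix]
    exact LinearMap.ker_le_ker_comp _ _

theorem det_submatrix_dicksonMatrix_eq_zero (hσ : ∀ τ, τ ∈ Subgroup.zpowers σ)
    {a : Gal(L/K) → L} {ι : Type*} [Fintype ι] [DecidableEq ι]
    (hι : finrank K (galoisOperator a).range < Fintype.card ι) (row col : ι → Gal(L/K)) :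
    ((dicksonMatrix a).submatrix row col).det = 0 := by
  classical
  let firstCol : Fin (finrank K (galoisOperator a).range) → Gal(L/K) := fun t => σ ^ (0 + t.val)
  obtain ⟨c, hc, hc0⟩ : ∃ c ∈ ((dicksonMatrix a).submatrix row firstCol).vecMulLinear.ker, c ≠ 0 :=
    exists_mem_ne_zero_of_ne_bot (LinearMap.ker_ne_bot_of_finrank_lt (by simpa using hι))
  rw [LinearMap.mem_ker, vecMulLinear_apply, vecMul_submatrix] at hc
  refine exists_vecMul_eq_zero_iff.1 ⟨c, hc0, ?_⟩
  rw [vecMul_submatrix, vecMul_dicksonMatrix_eq_zero hσ le_rfl fun t ht => congrFun hc ⟨t, ht⟩]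
  rfl

theorem det_cyclicSubmatrix_ne_zero (hσ : ∀ τ, τ ∈ Subgroup.zpowers σ)
    {a : Gal(L/K) → L} {l : ℕ} (hl : finrank K (galoisOperator a).range = l) (j k : ℕ) :
    (cyclicSubmatrix a σ l j k).det ≠ 0 := by
  classical
  intro hdet
  have horder : l ≤ orderOf σ := by
    rw [orderOf_eq_finrank_of_forall_mem_zpowers hσ, ← hl]
    exact finrank_le _
  obtain ⟨c, hc0, hc⟩ := exists_vecMul_eq_zero_iff.2 hdet
  rw [cyclicSubmatrix, vecMul_submatrix] at hc
  set b := c ᵥ* (1 : Matrix Gal(L/K) Gal(L/K) L).submatrix (fun r : Fin l => σ ^ (j + r.val)) id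
    with hb
  have hbσ : ∀ r : Fin l, b (σ ^ (j + r.val)) = c r := fun r => by
    have hrow : Function.Injective fun r : Fin l => σ ^ (j + r.val) := fun r r' h =>
      Fin.ext (injOn_pow_add_Iio_orderOf σ j (r.2.trans_le horder) (r'.2.trans_le horder) h)
    simp [hb, vecMul, dotProduct, one_apply, hrow.eq_iff]
  have hb_supp : ∀ g, b g ≠ 0 → ∃ i < l, σ ^ (j + i) = g := fun g hg => by
    by_contra! hrow
    exact hg (by simp [hb, vecMul, dotProduct, one_apply, fun r : Fin l => hrow r r.2])
  have hb_ker : (galoisOperator a).range ≤ (galoisOperator b).ker := by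
    rw [LinearMap.range_le_ker_iff, ← galoisOperator_vecMul_dicksonMatrix,
      vecMul_dicksonMatrix_eq_zero hσ hl.le fun t ht => congrFun hc ⟨t, ht⟩]
    simp [galoisOperator]
  refine hc0 (funext fun r => ?_)
  rw [← hbσ, eq_zero_of_le_ker_galoisOperator hσ hl.ge hb_supp hb_ker]
  rfl

theorem det_cyclicSubmatrix_eq_zero_iff (hσ : ∀ τ, τ ∈ Subgroup.zpowers σ)
    {a : Gal(L/K) → L} {n m : ℕ} (hn : finrank K L = n)
    (hm : m ≤ finrank K (galoisOperator a).ker) (j k : ℕ) :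
    (cyclicSubmatrix a σ (n - m) j k).det = 0 ↔ m < finrank K (galoisOperator a).ker := by
  have hrank := (galoisOperator a).finrank_range_add_finrank_ker
  refine ⟨fun hdet => hm.lt_of_ne fun h => ?_, fun h => ?_⟩
  · exact det_cyclicSubmatrix_ne_zero hσ (by lia) j k hdet
  · exact det_submatrix_dicksonMatrix_eq_zero hσ (by rw [Fintype.card_fin]; lia) _ _

theorem stmt_8_general (hσ : ∀ τ, τ ∈ Subgroup.zpowers σ) {a : Gal(L/K) → L} {n m : ℕ}
    (hn : finrank K L = n) (hm : m ≤ finrank K (galoisOperator a).ker) (j k j' k' : ℕ) :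
    (cyclicSubmatrix a σ (n - m) j k).det = 0 ↔ (cyclicSubmatrix a σ (n - m) j' k').det = 0 := by
  rw [det_cyclicSubmatrix_eq_zero_iff hσ hn hm, det_cyclicSubmatrix_eq_zero_iff hσ hn hm]

end Cyclic

section FiniteField

theorem nonempty_galoisField_ringHom {p e n : ℕ} [Fact p.Prime] (he : e ≠ 0) {F : Type*} [Field F]
    [Finite F] (hF : Nat.card F = (p ^ e) ^ n) : Nonempty (GaloisField p e →+* F) := by
  have hF' : Nat.card F = p ^ (e * n) := by rw [hF, pow_mul]
  let : Fintype F := Fintype.ofFinite F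
  have : CharP F p := charP_of_card_eq_prime_pow (Nat.card_eq_fintype_card.symm.trans hF')
  let : Algebra (ZMod p) F := ZMod.algebra F p
  have hrank : finrank (ZMod p) F = e * n :=
    Nat.pow_right_injective (Fact.out : p.Prime).two_le
      ((FiniteField.pow_finrank_eq_natCard p F).trans hF')
  have hdvd : finrank (ZMod p) (GaloisField p e) ∣ finrank (ZMod p) F := by
    rw [GaloisField.finrank p he, hrank]
    exact dvd_mul_right e n
  exact (FiniteField.nonempty_algHom_of_finrank_dvd hdvd).map AlgHom.toRingHom

theorem forall_mem_zpowers_frobenius_pow {K L : Type*} [Field K] [Fintype K] [Field L] [Finite L]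
    [Algebra K L] {s : ℕ} (hs : s.Coprime (finrank K L)) (τ : Gal(L/K)) :
    τ ∈ Subgroup.zpowers (FiniteField.frobeniusAlgEquivOfAlgebraic K L ^ s) := by
  obtain ⟨i, rfl⟩ := (FiniteField.bijective_frobeniusAlgEquivOfAlgebraic_pow K L).2 τ
  rw [← FiniteField.orderOf_frobeniusAlgEquivOfAlgebraic K L] at hs
  obtain ⟨t, ht⟩ := exists_pow_eq_self_of_coprime hs
  exact pow_mem (Subgroup.mem_zpowers_iff.2 ⟨t, by rw [zpow_natCast, ht]⟩) i

theorem exists_generator_apply_eq_pow {p e n s : ℕ} (hp : p.Prime) (he : e ≠ 0)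
    (hs : s.Coprime n) {F : Type*} [Field F] [Finite F] (hF : Nat.card F = (p ^ e) ^ n) :
    ∃ (K : Type) (_ : Field K) (_ : Algebra K F) (σ : Gal(F/K)),
      Nat.card K = p ^ e ∧ finrank K F = n ∧ (∀ τ, τ ∈ Subgroup.zpowers σ) ∧
        ∀ x, σ x = x ^ (p ^ e) ^ s := by
  have := Fact.mk hp
  obtain ⟨φ⟩ := nonempty_galoisField_ringHom he hF
  let : Algebra (GaloisField p e) F := φ.toAlgebra
  let : Fintype (GaloisField p e) := Fintype.ofFinite _
  have hK : Nat.card (GaloisField p e) = p ^ e := GaloisField.card p e he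
  have hrank : finrank (GaloisField p e) F = n := by
    rw [Module.natCard_eq_pow_finrank (K := GaloisField p e), hK] at hF
    exact Nat.pow_right_injective (Nat.one_lt_pow he hp.one_lt) hF
  refine ⟨GaloisField p e, inferInstance, inferInstance,
    FiniteField.frobeniusAlgEquivOfAlgebraic _ F ^ s, hK, hrank,
    forall_mem_zpowers_frobenius_pow (by rwa [hrank]), fun x => ?_⟩
  rw [AlgEquiv.coe_pow, FiniteField.coe_frobeniusAlgEquivOfAlgebraic_iterate,
    ← Nat.card_eq_fintype_card, hK]

end FiniteField

section PowerAutomorphism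

theorem exists_apply_pow_eq_mod_orderOf {G X : Type*} [Group G] (σ : G) (a : ℕ → X) :
    ∃ α : G → X, ∀ i, α (σ ^ i) = a (i % orderOf σ) := by
  have hfactors : Function.FactorsThrough (fun i => a (i % orderOf σ)) (σ ^ · : ℕ → G) :=
    fun i j h => congrArg a (pow_inj_mod.1 h)
  exact ⟨Function.extend (σ ^ ·) (fun i => a (i % orderOf σ)) fun _ => a 0, hfactors.extend_apply _⟩

variable {K L : Type*} [Field K] [Field L] [Algebra K L]
  {σ : Gal(L/K)} {N : ℕ} {a : ℕ → L} {α : Gal(L/K) → L}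

theorem pow_apply_eq_pow (hpow : ∀ x, σ x = x ^ N) (i : ℕ) (x : L) : (σ ^ i) x = x ^ N ^ i := by
  rw [AlgEquiv.coe_pow, show ⇑σ = (· ^ N) from funext hpow, pow_iterate]

variable [FiniteDimensional K L]

theorem galoisOperator_apply_eq_sum_pow [IsGalois K L] (hσ : ∀ τ, τ ∈ Subgroup.zpowers σ)
    (hpow : ∀ x, σ x = x ^ N) (hα : ∀ i, α (σ ^ i) = a (i % orderOf σ)) (x : L) :
    galoisOperator α x = ∑ i ∈ range (finrank K L), a i * x ^ N ^ i := by
  have horder := orderOf_eq_finrank_of_forall_mem_zpowers hσ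
  rw [galoisOperator_apply_eq_sum_range horder.ge
    (fun g _ => exists_lt_finrank_pow_add_eq hσ 0 g)]
  refine sum_congr rfl fun i hi => ?_
  rw [zero_add, hα, horder, Nat.mod_eq_of_lt (mem_range.1 hi), pow_apply_eq_pow hpow]

theorem dicksonMatrix_pow_pow (hpow : ∀ x, σ x = x ^ N)
    (hα : ∀ i, α (σ ^ i) = a (i % orderOf σ)) (i j : ℕ) :
    dicksonMatrix α (σ ^ i) (σ ^ j) =
      a ((j % orderOf σ + orderOf σ - i % orderOf σ) % orderOf σ) ^ N ^ (i % orderOf σ) := by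
  have hi : i % orderOf σ < orderOf σ := Nat.mod_lt _ (orderOf_pos σ)
  have hdiff : (σ ^ i)⁻¹ * σ ^ j = σ ^ (j % orderOf σ + orderOf σ - i % orderOf σ) := by
    rw [inv_mul_eq_iff_eq_mul, ← pow_mod_orderOf σ i, ← pow_mod_orderOf σ j, ← pow_add,
      Nat.add_sub_cancel' (by lia), pow_add, pow_orderOf_eq_one, mul_one]
  rw [dicksonMatrix, of_apply, hdiff, hα, ← pow_mod_orderOf σ i, pow_apply_eq_pow hpow]

theorem dickSub_zero_submatrix_eq_cyclicSubmatrix {n l : ℕ} (hn : orderOf σ = n) (hn0 : 0 < n)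
    (hpow : ∀ x, σ x = x ^ N) (hα : ∀ i, α (σ ^ i) = a (i % orderOf σ)) (j k : ℕ) :
    (dickSub N n 0 a).submatrix
        (fun r : Fin l => (⟨(j + r.val) % n, Nat.mod_lt _ hn0⟩ : Fin (n - 0)))
        (fun t : Fin l => (⟨(k + t.val) % n, Nat.mod_lt _ hn0⟩ : Fin (n - 0))) =
      cyclicSubmatrix α σ l j k := by
  ext r t
  simp only [cyclicSubmatrix, submatrix_apply, dickSub, of_apply,
    dicksonMatrix_pow_pow hpow hα, hn, add_zero]

theorem dickSub_eq_cyclicSubmatrix {n m : ℕ} (hn : orderOf σ = n) (hpow : ∀ x, σ x = x ^ N)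
    (hα : ∀ i, α (σ ^ i) = a (i % orderOf σ)) :
    dickSub N n m a = cyclicSubmatrix α σ (n - m) 0 m := by
  ext r t
  rw [cyclicSubmatrix, submatrix_apply, dicksonMatrix_pow_pow hpow hα, hn, zero_add,
    Nat.mod_eq_of_lt (show r.val < n by lia), Nat.mod_eq_of_lt (show m + t.val < n by lia),
    add_comm m, dickSub, of_apply]

end PowerAutomorphism

/-- Corollary: let `σ = q^s`, `gcd(s,n) = 1`, `f = ∑_{i=0}^{n-1} a_i x^{σ^i} ∈ F_{q^n}[x]`
and `0 ≤ m ≤ dim_q ker f` (`μ` being the kernel dimension, encoded by the kernel having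
`q^μ` elements).  For sets `J = {j₀, …, j₀+m-1}` and `K = {k₀, …, k₀+m-1}` of `m`
consecutive integers modulo `n`, let `M_{J,K}(f)` be the matrix obtained from `D_σ(f)` by
removing the rows indexed by `J` and the columns indexed by `K` (the remaining rows and
columns being kept in the cyclic orders `j₀+m, …, j₀+n-1` and `k₀+m, …, k₀+n-1` mod `n`,
which affects the determinant only up to sign).  Then
`det M_{J,K}(f) = 0 ↔ det D_{m,σ}(f) = 0`. -/
theorem stmt_8 (p e q n s : ℕ) (hp : p.Prime) (he : 0 < e) (hq : q = p ^ e)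
    (hn : 0 < n) (hs : Nat.gcd s n = 1)
    (F : Type*) [Field F] [Fintype F] (hF : Fintype.card F = q ^ n)
    (a : ℕ → F) (μ m j0 k0 : ℕ)
    (hker : Nat.card {x : F // ∑ i ∈ Finset.range n, a i * x ^ (q ^ s) ^ i = 0} = q ^ μ)
    (hm : m ≤ μ) :
    ((dickSub (q ^ s) n 0 a).submatrix
        (fun r : Fin (n - m) => (⟨(j0 + m + r.val) % n, Nat.mod_lt _ hn⟩ : Fin (n - 0)))
        (fun c : Fin (n - m) => (⟨(k0 + m + c.val) % n, Nat.mod_lt _ hn⟩ : Fin (n - 0)))).det = 0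
      ↔ (dickSub (q ^ s) n m a).det = 0 := by
  subst hq
  have hF' : Nat.card F = (p ^ e) ^ n := by rw [Nat.card_eq_fintype_card, hF]
  obtain ⟨K, _, _, σ, hK, hrank, hσ, hpow⟩ := exists_generator_apply_eq_pow hp he.ne' hs hF'
  have : Finite K := Nat.finite_of_card_ne_zero (hK ▸ (pow_pos hp.pos e).ne')
  have horder := (orderOf_eq_finrank_of_forall_mem_zpowers hσ).trans hrank
  obtain ⟨α, hα⟩ := exists_apply_pow_eq_mod_orderOf σ a
  have hμ : finrank K (galoisOperator α).ker = μ := by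
    simp only [← hrank, ← galoisOperator_apply_eq_sum_pow hσ hpow hα] at hker
    refine Nat.pow_right_injective (Nat.one_lt_pow he.ne' hp.one_lt) (Eq.trans ?_ hker)
    exact hK ▸ (Module.natCard_eq_pow_finrank (K := K)).symm
  rw [dickSub_zero_submatrix_eq_cyclicSubmatrix horder hn hpow hα,
    dickSub_eq_cyclicSubmatrix horder hpow hα]
  exact stmt_8_general hσ hrank (hμ ▸ hm) _ _ _ _
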